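/- Let 𝓛 be an inverse category of height p > 0 and M a family of types indexed by 𝓛(0). Then the derivative ∂_M 𝓛, equipped with the rank function rk(K, α) := rk K − 1, is an inverse category of height p − 1; moreover, for every object (K, α) of rank n in ∂_M 𝓛 and every m < n, the map sending an element ((L, β), (f, _)) of the fanout of (K, α) at m to the pair (L, f) is a bijection onto the fanout of K at m + 1 in 𝓛. -/

import Mathlib

/-!
The forgetful functor `(K, α) ↦ K` from the derivative is a discrete opfibration onto the objects
of positive rank: a morphism `f : K ⟶ L` out of the underlying object of `(K, α)` lifts to a
morphism out of `(K, α)` for exactly one section `β` over `L`, namely `β (N, g) = α (N, f ≫ g)`.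
Existence of the lift makes the fanout map surjective and uniqueness makes it injective.
Uniqueness also shows that a morphism of the derivative lying over an identity is an identity, so
that the axioms of an inverse category pass from `𝓛` to the derivative.
-/

open CategoryTheory

universe w v u v₂ u₂ v₃ u₃

/-- An inverse category: a category equipped with a rank function such that every
morphism weakly decreases rank, and only identities preserve rank. -/
structure InverseRank (C : Type u) [Category.{v} C] where
  rk : C → ℕ
  rk_le : ∀ {K L : C} (f : K ⟶ L), rk L ≤ rk K
  rk_id : ∀ {K L : C} (f : K ⟶ L), rk L = rk K → ∃ h : K = L, f = eqToHom h

/-- An inverse category has height `p` if every object has rank `< p`. -/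
def InverseRank.HasHeight {C : Type u} [Category.{v} C] (r : InverseRank C) (p : ℕ) : Prop :=
  ∀ K : C, r.rk K < p

section

variable {C : Type u} [Category.{v} C]

/-- The objects of rank `m`. -/
abbrev RankObj (rk : C → ℕ) (m : ℕ) : Type u := {L : C // rk L = m}

/-- The fanout of `K` at `m`: pairs `(L, f)` with `L` of rank `m` and `f : K ⟶ L`. -/
abbrev Fanout (rk : C → ℕ) (K : C) (m : ℕ) : Type max u v :=
  Σ L : RankObj rk m, (K ⟶ L.1)

/-- An object of the derivative `∂_M 𝓛`: a pair `(K, α)` with `K` of positive rank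
(i.e. of rank `n + 1` for some `n`) and `α` a section of `M` over the fanout of `K`
at `0`. -/
structure DerivObj (rk : C → ℕ) (M : RankObj rk 0 → Type w) : Type max u v w where
  pt : C
  pos : 0 < rk pt
  sec : ∀ F : Fanout rk pt 0, M F.1

/-- The derivative category `∂_M 𝓛`: a morphism `(K₁, α₁) ⟶ (K₂, α₂)` is a morphism
`f : K₁ ⟶ K₂` of `𝓛` such that `α₁ (L, f ≫ g) = α₂ (L, g)` for every `(L, g)` in the
fanout of `K₂` at `0`. -/
instance derivCategory (rk : C → ℕ) (M : RankObj rk 0 → Type w) :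
    Category (DerivObj rk M) where
  Hom A B := {f : A.pt ⟶ B.pt // ∀ F : Fanout rk B.pt 0, A.sec ⟨F.1, f ≫ F.2⟩ = B.sec F}
  id A := ⟨𝟙 A.pt, fun F => by rw [Category.id_comp]⟩
  comp {A B Z} f g := ⟨f.1 ≫ g.1, fun F => by
    rw [Category.assoc]
    exact (f.2 ⟨F.1, g.1 ≫ F.2⟩).trans (g.2 F)⟩
  id_comp f := Subtype.ext (Category.id_comp f.1)
  comp_id f := Subtype.ext (Category.comp_id f.1)
  assoc f g h := Subtype.ext (Category.assoc f.1 g.1 h.1)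

/-- The rank function of the derivative category: `rk (K, α) := rk K - 1`. -/
abbrev derivRk (rk : C → ℕ) (M : RankObj rk 0 → Type w) : DerivObj rk M → ℕ :=
  fun A => rk A.pt - 1

end

/-- The map sending an element `((L, β), (f, _))` of the fanout of `(K, α)` at `m`
in the derivative `∂_M 𝓛` to the pair `(L, f)` in the fanout of `K` at `m + 1`
in `𝓛`. -/
def derivFanoutDown {C : Type u} [Category.{v} C] (rk : C → ℕ)
    (M : RankObj rk 0 → Type w) (A : DerivObj rk M) (m : ℕ) :
    Fanout (derivRk rk M) A m → Fanout rk A.pt (m + 1) :=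
  fun F => ⟨⟨F.1.1.pt, by have h1 : rk F.1.1.pt - 1 = m := F.1.2; have h2 := F.1.1.pos; omega⟩, F.2.1⟩

namespace DerivObj

variable {C : Type u} [Category.{v} C] {rk : C → ℕ} {M : RankObj rk 0 → Type w}

/-- The pushforward of `(K, α)` along `f : K ⟶ L`: the object `L` with the section
`(N, g) ↦ α (N, f ≫ g)`, which is the only one making `f` a morphism out of `(K, α)`. -/
def pushforward (A : DerivObj rk M) {L : C} (f : A.pt ⟶ L) (hL : 0 < rk L) : DerivObj rk M where
  pt := L
  pos := hL
  sec F := A.sec ⟨F.1, f ≫ F.2⟩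

/-- The lift of `f : K ⟶ L` to a morphism from `(K, α)` to its pushforward along `f`. -/
def toPushforward (A : DerivObj rk M) {L : C} (f : A.pt ⟶ L) (hL : 0 < rk L) :
    A ⟶ A.pushforward f hL :=
  ⟨f, fun _ => rfl⟩

@[elab_as_elim]
theorem hom_induction {A : DerivObj rk M} {motive : ∀ B : DerivObj rk M, (A ⟶ B) → Prop}
    (toPushforward : ∀ (L : C) (f : A.pt ⟶ L) (hL : 0 < rk L),
      motive (A.pushforward f hL) (A.toPushforward f hL))
    {B : DerivObj rk M} (φ : A ⟶ B) : motive B φ := by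
  obtain ⟨L, hL, β⟩ := B
  obtain ⟨f : A.pt ⟶ L, hf⟩ := φ
  obtain rfl : (A.pushforward f hL).sec = β := funext hf
  exact toPushforward L f hL

theorem pushforward_eq_of_hom {A B : DerivObj rk M} (φ : A ⟶ B) :
    A.pushforward φ.1 B.pos = B := by
  induction φ using hom_induction with
  | toPushforward => rfl

theorem pushforward_eqToHom (A : DerivObj rk M) {L : C} (h : A.pt = L) (hL : 0 < rk L) :
    A.pushforward (eqToHom h) hL = A := by
  subst h
  exact pushforward_eq_of_hom (𝟙 A)

theorem eqToHom_val {A B : DerivObj rk M} (h : A = B) :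
    (eqToHom h).1 = eqToHom (congrArg pt h) := by
  subst h
  rfl

theorem exists_eq_eqToHom {A B : DerivObj rk M} (φ : A ⟶ B) (h : A.pt = B.pt)
    (hφ : φ.1 = eqToHom h) : ∃ e : A = B, φ = eqToHom e := by
  have e : A = B := calc
    A = A.pushforward (eqToHom h) B.pos := (A.pushforward_eqToHom h B.pos).symm
    _ = A.pushforward φ.1 B.pos := by rw [hφ]
    _ = B := pushforward_eq_of_hom φ
  exact ⟨e, Subtype.ext (hφ.trans (eqToHom_val e).symm)⟩

end DerivObj

namespace InverseRank

variable {C : Type u} [Category.{v} C]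

/-- The derivative as an inverse category, with rank function `rk (K, α) = rk K - 1`. -/
def deriv (r : InverseRank C) (M : RankObj r.rk 0 → Type w) : InverseRank (DerivObj r.rk M) where
  rk := derivRk r.rk M
  rk_le φ := Nat.sub_le_sub_right (r.rk_le φ.1) 1
  rk_id {A B} φ h := by
    have hrk : r.rk B.pt = r.rk A.pt := Nat.sub_one_cancel B.pos A.pos h
    obtain ⟨hpt, hφ⟩ := r.rk_id φ.1 hrk
    exact DerivObj.exists_eq_eqToHom φ hpt hφ

theorem HasHeight.deriv {r : InverseRank C} {p : ℕ} (hr : r.HasHeight p)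
    (M : RankObj r.rk 0 → Type w) : (r.deriv M).HasHeight (p - 1) :=
  fun A => Nat.sub_lt_sub_right A.pos (hr A.pt)

end InverseRank

section Fanout

variable {C : Type u} [Category.{v} C] (rk : C → ℕ) (M : RankObj rk 0 → Type w)

/-- The inverse of `derivFanoutDown`: it lifts `f : K ⟶ L` to the morphism from `(K, α)` to its
pushforward along `f`. -/
def derivFanoutUp (A : DerivObj rk M) (m : ℕ) (F : Fanout rk A.pt (m + 1)) :
    Fanout (derivRk rk M) A m :=
  have hpos : 0 < rk F.1.1 := m.succ_pos.trans_eq F.1.2.symm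
  ⟨⟨A.pushforward F.2 hpos, Nat.sub_eq_of_eq_add F.1.2⟩, A.toPushforward F.2 hpos⟩

theorem derivFanoutUp_rightInverse (A : DerivObj rk M) (m : ℕ) :
    Function.RightInverse (derivFanoutUp rk M A m) (derivFanoutDown rk M A m) :=
  fun _ => rfl

theorem derivFanoutUp_leftInverse (A : DerivObj rk M) (m : ℕ) :
    Function.LeftInverse (derivFanoutUp rk M A m) (derivFanoutDown rk M A m) := by
  rintro ⟨⟨B, _⟩, φ : A ⟶ B⟩
  induction φ using DerivObj.hom_induction with
  | toPushforward => rfl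

theorem derivFanoutDown_bijective (A : DerivObj rk M) (m : ℕ) :
    Function.Bijective (derivFanoutDown rk M A m) :=
  ⟨(derivFanoutUp_leftInverse rk M A m).injective,
    (derivFanoutUp_rightInverse rk M A m).surjective⟩

end Fanout

/-- For an inverse category `𝓛` of height `p > 0` and a family `M` of
types indexed by `𝓛(0)`, the derivative `∂_M 𝓛` equipped with the rank function
`rk (K, α) := rk K - 1` is an inverse category of height `p - 1`; moreover for every
object `(K, α)` of rank `n` in `∂_M 𝓛` and every `m < n`, the map
`((L, β), (f, _)) ↦ (L, f)` is a bijection from the fanout of `(K, α)` at `m` onto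
the fanout of `K` at `m + 1` in `𝓛`. -/
theorem deriv_isInverse_and_fanout_bijective {C : Type u} [Category.{v} C]
    (r : InverseRank C) (p : ℕ) (hp : 0 < p) (hh : r.HasHeight p)
    (M : RankObj r.rk 0 → Type w) :
    (∃ dr : InverseRank (DerivObj r.rk M),
        dr.rk = derivRk r.rk M ∧ dr.HasHeight (p - 1)) ∧
      ∀ (A : DerivObj r.rk M) (m : ℕ), m < derivRk r.rk M A →
        Function.Bijective (derivFanoutDown r.rk M A m) :=
  ⟨⟨r.deriv M, rfl, hh.deriv M⟩, fun A m _ => derivFanoutDown_bijective r.rk M A m⟩
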